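/- Suppose X is a finite-dimensional vector space over an algebraically closed field F of characteristic 0 (e.g., F = ℂ), and T is a linear transformation on X. If S is a linear transformation such that for every x ∈ X, Sx ∈ {0} ∪ {T^n x : n ≥ 0}, then S = 0 or S = T^n for some n ≥ 0. -/

import Mathlib

/-!
If `X` has a vector `x` whose evaluation map is injective on the ring generated by `S` and `T`,
then the single relation `S x = 0` or `S x = T ^ n x` already forces `S = 0` or `S = T ^ n`.
In a basis of `X`, the matrices of `S` and `T` have entries in a finitely generated subfield `K`
of `F`, and every vector whose coordinates are linearly independent over `K` is such an `x`.
So it is enough that `F` has infinite degree over each of its finitely generated subfields, that is,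
that `F` itself is not finitely generated.

An algebraically closed field is never finitely generated. Over a purely transcendental extension
`k(xᵢ)` of positive transcendence degree it contains all roots `xᵢ ^ (1 / N)`, which have degree `N`
by Eisenstein's criterion, so a finitely generated one would be finite over its prime field `k`.
Then `k` is not a finite field, and the same argument applied to the prime `2` of `ℤ` excludes
`k = ℚ`.
-/

section AlgClosed

open Polynomial

theorem irreducible_X_pow_sub_C_of_prime {R : Type*} [CommRing R] [IsDomain R] {p : R}
    (hp : Prime p) {N : ℕ} (hN : N ≠ 0) : Irreducible (X ^ N - C p : R[X]) := by
  have hmonic : (X ^ N - C p : R[X]).Monic := monic_X_pow_sub_C p hN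
  have hdegree : (X ^ N - C p : R[X]).natDegree = N := natDegree_X_pow_sub_C
  have hprime : (Ideal.span {p}).IsPrime := (Ideal.span_singleton_prime hp.ne_zero).2 hp
  have eisenstein : (X ^ N - C p : R[X]).IsEisensteinAt (Ideal.span {p}) := by
    refine ⟨?leading, fun {n} hn => ?lower, ?constant⟩
    case leading =>
      rw [hmonic.leadingCoeff]
      exact hprime.one_notMem
    case lower =>
      rw [hdegree] at hn
      rw [coeff_sub, coeff_X_pow, if_neg hn.ne, zero_sub, neg_mem_iff, coeff_C]
      split_ifs
      · exact Ideal.mem_span_singleton_self p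
      · exact zero_mem _
    case constant =>
      rw [coeff_sub, coeff_X_pow, if_neg hN.symm, coeff_C_zero, zero_sub, neg_mem_iff,
        Ideal.span_singleton_pow, Ideal.mem_span_singleton]
      simpa using (pow_dvd_pow_iff hp.ne_zero hp.not_isUnit (n := 2) (m := 1)).not.2 (by norm_num)
  exact eisenstein.irreducible hprime hmonic.isPrimitive (by omega)

theorem not_finite_of_prime_of_isAlgClosed {R : Type*} (K F : Type*) [CommRing R] [IsDomain R]
    [IsIntegrallyClosed R] [Field K] [Algebra R K] [IsFractionRing R K] [Field F] [IsAlgClosed F]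
    [Algebra K F] {p : R} (hp : Prime p) : ¬ Module.Finite K F := by
  intro _
  have le_finrank {N : ℕ} (hN : N ≠ 0) : N ≤ Module.finrank K F := by
    have hmonic : (X ^ N - C p : R[X]).Monic := monic_X_pow_sub_C p hN
    have hirr : Irreducible ((X ^ N - C p : R[X]).map (algebraMap R K)) :=
      hmonic.irreducible_iff_irreducible_map_fraction_map.1
        (irreducible_X_pow_sub_C_of_prime hp hN)
    obtain ⟨α, hα⟩ := IsAlgClosed.exists_pow_nat_eq (algebraMap K F (algebraMap R K p))
      (Nat.pos_of_ne_zero hN)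
    have hminpoly : (X ^ N - C p : R[X]).map (algebraMap R K) = minpoly K α :=
      minpoly.eq_of_irreducible_of_monic hirr (by simp [hα]) (hmonic.map _)
    have hdegree : (minpoly K α).natDegree = N := by
      rw [← hminpoly, hmonic.natDegree_map, natDegree_X_pow_sub_C]
    exact hdegree.ge.trans (minpoly.natDegree_le α)
  exact (Nat.lt_succ_self _).not_ge (le_finrank (Nat.succ_ne_zero _))

theorem not_essFiniteType_of_prime_of_isAlgClosed {R : Type*} (F : Type*) [CommRing R] [IsDomain R]
    [IsIntegrallyClosed R] [Field F] [IsAlgClosed F] [Algebra R F] [FaithfulSMul R F]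
    [Algebra.IsAlgebraic R F] {p : R} (hp : Prime p) : ¬ Algebra.EssFiniteType R F := by
  intro _
  let K := FractionRing R
  let : Algebra K F := FractionRing.liftAlgebra R F
  have : IsScalarTower R K F := FractionRing.isScalarTower_liftAlgebra R F
  have : Algebra.IsAlgebraic K F :=
    (IsFractionRing.comap_isAlgebraic_iff (A := R)).1 inferInstance
  have : Algebra.EssFiniteType K F := Algebra.EssFiniteType.of_comp R K F
  exact not_finite_of_prime_of_isAlgClosed K F hp
    Algebra.finite_of_essFiniteType_of_isAlgebraic

theorem finite_of_essFiniteType_of_isAlgClosed (k F : Type*) [Field k] [Field F] [IsAlgClosed F]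
    [Algebra k F] [Algebra.EssFiniteType k F] : Module.Finite k F := by
  obtain ⟨ι, x, hx⟩ := exists_isTranscendenceBasis' k F
  have hι : IsEmpty ι := by
    by_contra! hι
    obtain ⟨i⟩ := hι
    let R := Algebra.adjoin k (Set.range x)
    let e : MvPolynomial ι k ≃ₐ[k] R := hx.1.aevalEquiv
    have : UniqueFactorizationMonoid R := e.toMulEquiv.uniqueFactorizationMonoid inferInstance
    have : Algebra.IsAlgebraic R F := hx.isAlgebraic
    have hprime : Prime (e (MvPolynomial.X i)) :=
      (MulEquiv.prime_iff e.toMulEquiv).2 MvPolynomial.X_prime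
    exact not_essFiniteType_of_prime_of_isAlgClosed F hprime
      (Algebra.EssFiniteType.of_comp k R F)
  have : Algebra.IsAlgebraic k F := hx.isEmpty_iff_isAlgebraic.1 hι
  exact Algebra.finite_of_essFiniteType_of_isAlgebraic

theorem essFiniteType_of_field_fg (k F : Type*) [Field k] [Field F] [Algebra k F]
    [hF : Field.FG F] : Algebra.EssFiniteType k F := by
  obtain ⟨s, hs⟩ := hF.finitely_generated
  refine IntermediateField.fg_top_iff.1 ⟨s, IntermediateField.toSubfield_injective ?_⟩
  have hle : Subfield.closure (s : Set F) ≤ (IntermediateField.adjoin k (s : Set F)).toSubfield :=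
    Subfield.closure_le.2 fun _ hy => IntermediateField.subset_adjoin k _ hy
  exact top_le_iff.1 (hs ▸ hle)

theorem not_field_fg_of_isAlgClosed (F : Type*) [Field F] [IsAlgClosed F] : ¬ Field.FG F := by
  intro _
  obtain ⟨p, _⟩ := CharP.exists F
  rcases CharP.char_is_prime_or_zero F p with hp | rfl
  · have : Fact p.Prime := ⟨hp⟩
    let : Algebra (ZMod p) F := ZMod.algebra F p
    have := essFiniteType_of_field_fg (ZMod p) F
    have := finite_of_essFiniteType_of_isAlgClosed (ZMod p) F
    have : Finite F := Module.finite_of_finite (ZMod p)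
    exact not_finite F
  · have : CharZero F := CharP.charP_to_charZero F
    have := essFiniteType_of_field_fg ℚ F
    exact not_finite_of_prime_of_isAlgClosed ℚ F Int.prime_two
      (finite_of_essFiniteType_of_isAlgClosed ℚ F)

end AlgClosed

theorem field_fg_of_finite_closure {F : Type*} [Field F] {s : Set F} (hs : s.Finite)
    [hfinite : Module.Finite (Subfield.closure s) F] : Field.FG F := by
  classical
  obtain ⟨t, ht⟩ := hfinite.fg_top
  refine ⟨hs.toFinset ∪ t, eq_top_iff.2 fun x _ => ?_⟩
  rw [Finset.coe_union, hs.coe_toFinset]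
  have hx : x ∈ Submodule.span (Subfield.closure s) (t : Set F) := ht ▸ Submodule.mem_top
  induction hx using Submodule.span_induction with
  | mem y hy => exact Subfield.subset_closure (Or.inr hy)
  | zero => exact zero_mem _
  | add y z _ _ hy hz => exact add_mem (hy trivial) (hz trivial)
  | smul c y _ hy =>
    exact mul_mem (Subfield.closure_mono Set.subset_union_left c.2) (hy trivial)

theorem injective_map_mulVec_of_linearIndependent {m n K F : Type*} [Fintype n] [CommRing K]
    [CommRing F] [Algebra K F] {v : n → F} (hv : LinearIndependent K v) :
    Function.Injective fun M : Matrix m n K => (M.map (algebraMap K F)).mulVec v := by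
  intro M N hMN
  ext i j
  refine congrFun (hv.fintypeLinearCombination_injective ?_) j
  simpa [Matrix.mulVec, dotProduct, Fintype.linearCombination_apply, Algebra.smul_def]
    using congrFun hMN i

theorem injOn_apply_of_linearIndependent_repr {K F X n : Type*} [CommRing K] [CommRing F]
    [Algebra K F] [AddCommGroup X] [Module F X] [Fintype n] [DecidableEq n]
    (b : Module.Basis n F X) {x : X} (hx : LinearIndependent K (b.repr x : n → F)) :
    Set.InjOn (fun U : Module.End F X => U x)
      {U | ∃ M : Matrix n n K, M.map (algebraMap K F) = LinearMap.toMatrix b b U} := by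
  rintro U ⟨A, hA⟩ V ⟨B, hB⟩ (hUV : U x = V x)
  have hAB : A = B := by
    refine injective_map_mulVec_of_linearIndependent hx ?_
    simp only [hA, hB, LinearMap.toMatrix_mulVec_repr, hUV]
  exact (LinearMap.toMatrix b b).injective (by rw [← hA, ← hB, hAB])

theorem exists_injOn_apply_subringClosure {F X : Type*} [Field F] (hF : ¬ Field.FG F)
    [AddCommGroup X] [Module F X] [FiniteDimensional F X] {G : Set (Module.End F X)}
    (hG : G.Finite) :
    ∃ x : X, Set.InjOn (fun U : Module.End F X => U x) (Subring.closure G) := by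
  let d := Module.finrank F X
  let b : Module.Basis (Fin d) F X := Module.finBasis F X
  let entries : Set F := ⋃ U ∈ G, Set.range fun ij : Fin d × Fin d =>
    LinearMap.toMatrixAlgEquiv b U ij.1 ij.2
  have hentries : entries.Finite := hG.biUnion fun U _ => Set.finite_range _
  let K := Subfield.closure entries
  have hrank : Cardinal.aleph0 ≤ Module.rank K F := by
    rw [← not_lt, Module.rank_lt_aleph0_iff]
    exact fun _ => hF (field_fg_of_finite_closure hentries)
  obtain ⟨v, hv⟩ : ∃ v : Fin d → F, LinearIndependent K v :=
    exists_linearIndependent_of_le_rank (Cardinal.natCast_lt_aleph0.le.trans hrank)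
  have hrepr : (b.repr (b.equivFun.symm v) : Fin d → F) = v := b.equivFun.apply_symm_apply v
  have hclosure : Subring.closure G ≤ (algebraMap K F).mapMatrix.range.comap
      (LinearMap.toMatrixAlgEquiv b : Module.End F X →+* Matrix (Fin d) (Fin d) F) :=
    Subring.closure_le.2 fun U hU =>
      ⟨fun i j => ⟨LinearMap.toMatrixAlgEquiv b U i j,
        Subfield.subset_closure (Set.mem_biUnion hU ⟨(i, j), rfl⟩)⟩, rfl⟩
  exact ⟨b.equivFun.symm v,
    (injOn_apply_of_linearIndependent_repr (K := K) b (hrepr.symm ▸ hv)).mono hclosure⟩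

theorem stmt_11_general {F : Type*} [Field F] (hF : ¬ Field.FG F)
    {X : Type*} [AddCommGroup X] [Module F X] [FiniteDimensional F X]
    (T S : Module.End F X)
    (hS : ∀ x : X, S x = 0 ∨ ∃ n : ℕ, S x = (T ^ n) x) :
    S = 0 ∨ ∃ n : ℕ, S = T ^ n := by
  obtain ⟨x, hx⟩ := exists_injOn_apply_subringClosure hF (Set.toFinite {S, T})
  have hS_mem : S ∈ Subring.closure {S, T} := Subring.subset_closure (by simp)
  have hT_mem : T ∈ Subring.closure {S, T} := Subring.subset_closure (by simp)
  exact (hS x).imp (hx hS_mem (zero_mem _)) fun ⟨n, hn⟩ => ⟨n, hx hS_mem (pow_mem hT_mem n) hn⟩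

theorem stmt_11 {F : Type*} [Field F] [IsAlgClosed F] [CharZero F]
    {X : Type*} [AddCommGroup X] [Module F X] [FiniteDimensional F X]
    (T S : Module.End F X)
    (hS : ∀ x : X, S x = 0 ∨ ∃ n : ℕ, S x = (T ^ n) x) :
    S = 0 ∨ ∃ n : ℕ, S = T ^ n :=
  stmt_11_general (not_field_fg_of_isAlgClosed F) T S hS
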